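/- (Local-graph form of Theorem 1.1.) Let n ≥ 1, let k ≥ 2 be an integer and α ∈ [0,1]. Let f, g : ℝⁿ → [0,∞) be convex functions that are C² on a neighborhood of 0 with f(0) = 0 = g(0), and let h = f □ g. Suppose f is C^{k,α} near 0 and Hess f|_{x=0} is positive definite. Then: (i) h is C² near 0; (ii) Hess g|_{x=0} is positive definite if and only if Hess h|_{x=0} is positive definite; (iii) g is C^{k,α} near 0 if and only if h is C^{k,α} near 0. -/

import Mathlib

open Set Filter Topology

noncomputable section

/-- `f` is `C^{k,α}` near `x₀`: on some open neighborhood of `x₀` it is `C^k` and its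
`k`-th derivative is `α`-Hölder continuous there. -/
def CkAlphaNear {E F : Type*} [NormedAddCommGroup E] [NormedSpace ℝ E]
    [NormedAddCommGroup F] [NormedSpace ℝ F]
    (k : ℕ) (α : ℝ) (f : E → F) (x₀ : E) : Prop :=
  ∃ U : Set E, IsOpen U ∧ x₀ ∈ U ∧ ContDiffOn ℝ k f U ∧
    ∃ C : ℝ, ∀ y ∈ U, ∀ z ∈ U,
      ‖iteratedFDeriv ℝ k f y - iteratedFDeriv ℝ k f z‖ ≤ C * ‖y - z‖ ^ α

/-- The infimal convolution `(f □ g)(x) = ⨅ y, f y + g (x - y)`. -/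
def infConv {E : Type*} [NormedAddCommGroup E] (f g : E → ℝ) (x : E) : ℝ :=
  ⨅ y : E, (f y + g (x - y))

section HolderCalculus

variable {E F G : Type} [NormedAddCommGroup E] [NormedSpace ℝ E]
  [NormedAddCommGroup F] [NormedSpace ℝ F] [NormedAddCommGroup G] [NormedSpace ℝ G]
  {α : ℝ} {m : ℕ}

/-- Local form of the zeroth order Hölder condition. -/
theorem ckAlphaNear_zero_iff {f : E → F} {x : E} :
    CkAlphaNear 0 α f x ↔ (∀ᶠ y in 𝓝 x, ContinuousAt f y) ∧
      ∃ C : ℝ, 0 ≤ C ∧ ∀ᶠ p in 𝓝 (x, x), ‖f p.1 - f p.2‖ ≤ C * ‖p.1 - p.2‖ ^ α := by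
  have key : ∀ y z : E, ‖iteratedFDeriv ℝ 0 f y - iteratedFDeriv ℝ 0 f z‖ = ‖f y - f z‖ := by
    intro y z
    rw [iteratedFDeriv_zero_eq_comp, Function.comp_apply, Function.comp_apply, ← map_sub,
      LinearIsometryEquiv.norm_map]
  unfold CkAlphaNear
  simp only [key]
  constructor
  · rintro ⟨U, hU, hx, hc, C, hC⟩
    refine ⟨?_, max C 0, le_max_right _ _, ?_⟩
    · filter_upwards [hU.mem_nhds hx] with y hy
      exact hc.continuousOn.continuousAt (hU.mem_nhds hy)
    · have : U ×ˢ U ∈ 𝓝 (x, x) := prod_mem_nhds (hU.mem_nhds hx) (hU.mem_nhds hx)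
      filter_upwards [this] with p hp
      refine (hC p.1 hp.1 p.2 hp.2).trans ?_
      gcongr
      exact le_max_left _ _
  · rintro ⟨hc, C, _, hC⟩
    rw [nhds_prod_eq] at hC
    obtain ⟨t, ht, hts⟩ := Filter.mem_prod_self_iff.1 hC
    obtain ⟨U, hUs, hU, hx⟩ := mem_nhds_iff.1 (inter_mem hc ht)
    refine ⟨U, hU, hx, ?_, C, ?_⟩
    · rw [Nat.cast_zero, contDiffOn_zero]
      intro y hy
      exact (hUs hy).1.continuousWithinAt
    · intro y hy z hz
      exact hts (show (y, z) ∈ t ×ˢ t from ⟨(hUs hy).2, (hUs hz).2⟩)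

theorem ckAlphaNear_succ_iff {f : E → F} {x : E} :
    CkAlphaNear (m + 1) α f x ↔ (∀ᶠ y in 𝓝 x, DifferentiableAt ℝ f y) ∧
      CkAlphaNear m α (fderiv ℝ f) x := by
  have key : ∀ y z : E, ‖iteratedFDeriv ℝ (m + 1) f y - iteratedFDeriv ℝ (m + 1) f z‖
      = ‖iteratedFDeriv ℝ m (fderiv ℝ f) y - iteratedFDeriv ℝ m (fderiv ℝ f) z‖ := by
    intro y z
    have h := (continuousMultilinearCurryRightEquiv' ℝ m E F).symm.isometry.dist_eq
      (iteratedFDeriv ℝ m (fderiv ℝ f) y) (iteratedFDeriv ℝ m (fderiv ℝ f) z)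
    rw [dist_eq_norm, dist_eq_norm] at h
    rw [iteratedFDeriv_succ_eq_comp_right, iteratedFDeriv_succ_eq_comp_right]
    exact h
  unfold CkAlphaNear
  simp only [key]
  constructor
  · rintro ⟨U, hU, hx, hc, C, hC⟩
    rw [Nat.cast_succ, contDiffOn_succ_iff_fderiv_of_isOpen hU] at hc
    refine ⟨?_, U, hU, hx, hc.2.2, C, hC⟩
    filter_upwards [hU.mem_nhds hx] with y hy
    exact hc.1.differentiableAt (hU.mem_nhds hy)
  · rintro ⟨hd, U, hU, hx, hc, C, hC⟩
    obtain ⟨V, hVs, hV, hxV⟩ := mem_nhds_iff.1 hd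
    refine ⟨U ∩ V, hU.inter hV, ⟨hx, hxV⟩, ?_, C, fun y hy z hz => hC y hy.1 z hz.1⟩
    rw [Nat.cast_succ, contDiffOn_succ_iff_fderiv_of_isOpen (hU.inter hV)]
    refine ⟨fun y hy => (hVs hy.2).differentiableWithinAt, by simp, hc.mono inter_subset_left⟩

theorem CkAlphaNear.contDiffAt {f : E → F} {x : E} (h : CkAlphaNear m α f x) :
    ContDiffAt ℝ m f x := by
  obtain ⟨U, hU, hx, hc, _⟩ := h
  exact hc.contDiffAt (hU.mem_nhds hx)

theorem CkAlphaNear.congr {f g : E → F} {x : E} (h : CkAlphaNear m α f x)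
    (hfg : f =ᶠ[𝓝 x] g) : CkAlphaNear m α g x := by
  induction m generalizing F with
  | zero =>
    rw [ckAlphaNear_zero_iff] at h ⊢
    obtain ⟨h1, C, hC0, hC⟩ := h
    refine ⟨?_, C, hC0, ?_⟩
    · filter_upwards [h1, hfg.eventuallyEq_nhds] with y hy hy'
      exact hy.congr hy'
    · have h1 := (continuous_fst.tendsto (x, x)).eventually hfg
      have h2 := (continuous_snd.tendsto (x, x)).eventually hfg
      filter_upwards [hC, h1, h2] with p hp hp1 hp2
      rw [← hp1, ← hp2]; exact hp
  | succ m ih =>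
    rw [ckAlphaNear_succ_iff] at h ⊢
    refine ⟨?_, ih h.2 hfg.fderiv⟩
    filter_upwards [h.1, hfg.eventuallyEq_nhds] with y hy hy'
    exact hy'.differentiableAt_iff.1 hy

theorem ckAlphaNear_lip {f : E → F} {x : E} (hf : ContDiffAt ℝ 1 f x) :
    ∃ C : ℝ, 0 ≤ C ∧ ∀ᶠ p in 𝓝 (x, x), ‖f p.1 - f p.2‖ ≤ C * ‖p.1 - p.2‖ := by
  obtain ⟨K, t, ht, hK⟩ := hf.exists_lipschitzOnWith
  refine ⟨K, K.2, ?_⟩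
  filter_upwards [prod_mem_nhds ht ht] with p hp
  simpa [dist_eq_norm] using hK.dist_le_mul _ hp.1 _ hp.2

theorem ckAlphaNear_of_contDiffAt (hα : α ∈ Icc (0:ℝ) 1) {f : E → F} {x : E}
    (hf : ContDiffAt ℝ (m + 1) f x) : CkAlphaNear m α f x := by
  induction m generalizing F with
  | zero =>
    rw [ckAlphaNear_zero_iff]
    have hf1 : ContDiffAt ℝ 1 f x := by simpa using hf
    refine ⟨?_, ?_⟩
    · filter_upwards [hf1.eventually (by simp)] with y hy using hy.continuousAt
    · obtain ⟨C, hC0, hC⟩ := ckAlphaNear_lip hf1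
      refine ⟨C, hC0, ?_⟩
      have hb : Metric.ball x (1/2) ∈ 𝓝 x := Metric.ball_mem_nhds _ (by norm_num)
      filter_upwards [hC, prod_mem_nhds hb hb] with p hp hp'
      refine hp.trans ?_
      gcongr
      have h1 : ‖p.1 - p.2‖ ≤ 1 := by
        rw [← dist_eq_norm]
        have := dist_triangle_right p.1 p.2 x
        have h1 := Metric.mem_ball.1 hp'.1
        have h2 := Metric.mem_ball.1 hp'.2
        linarith
      simpa using Real.rpow_le_rpow_of_exponent_ge' (norm_nonneg _) h1 hα.1 hα.2
  | succ m ih =>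
    rw [ckAlphaNear_succ_iff]
    refine ⟨?_, ih (hf.fderiv_right (by push_cast; rfl))⟩
    have : ContDiffAt ℝ 1 f x := hf.of_le (by push_cast; exact le_add_self)
    filter_upwards [this.eventually (by simp)] with y hy
    exact hy.differentiableAt (by simp)

theorem CkAlphaNear.of_succ (hα : α ∈ Icc (0:ℝ) 1) {f : E → F} {x : E}
    (hf : CkAlphaNear (m + 1) α f x) : CkAlphaNear m α f x :=
  ckAlphaNear_of_contDiffAt hα (by simpa using hf.contDiffAt)

theorem CkAlphaNear.add {f g : E → F} {x : E} (hf : CkAlphaNear m α f x)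
    (hg : CkAlphaNear m α g x) : CkAlphaNear m α (fun y => f y + g y) x := by
  induction m generalizing F with
  | zero =>
    rw [ckAlphaNear_zero_iff] at *
    obtain ⟨hf, C, hC0, hC⟩ := hf
    obtain ⟨hg, D, hD0, hD⟩ := hg
    refine ⟨?_, C + D, by positivity, ?_⟩
    · filter_upwards [hf, hg] with y h1 h2 using h1.add h2
    · filter_upwards [hC, hD] with p h1 h2
      calc _ = ‖(f p.1 - f p.2) + (g p.1 - g p.2)‖ := by congr 1; abel
        _ ≤ _ := norm_add_le _ _
        _ ≤ _ := by rw [add_mul]; gcongr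
  | succ m ih =>
    rw [ckAlphaNear_succ_iff] at *
    refine ⟨?_, (ih hf.2 hg.2).congr ?_⟩
    · filter_upwards [hf.1, hg.1] with y h1 h2 using h1.add h2
    · filter_upwards [hf.1, hg.1] with y h1 h2
      exact (fderiv_fun_add h1 h2).symm

theorem CkAlphaNear.bilin (hα : α ∈ Icc (0:ℝ) 1) {H : Type} [NormedAddCommGroup H]
    [NormedSpace ℝ H] (B : F →L[ℝ] G →L[ℝ] H) {f : E → F} {g : E → G} {x : E}
    (hf : CkAlphaNear m α f x) (hg : CkAlphaNear m α g x) :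
    CkAlphaNear m α (fun y => B (f y) (g y)) x := by
  induction m generalizing F G H with
  | zero =>
    rw [ckAlphaNear_zero_iff] at *
    obtain ⟨hf, C, hC0, hC⟩ := hf
    obtain ⟨hg, D, hD0, hD⟩ := hg
    have hbf : ∀ᶠ y in 𝓝 x, ‖f y‖ < ‖f x‖ + 1 :=
      hf.self_of_nhds.norm.eventually_lt_const (by simp)
    have hbg : ∀ᶠ y in 𝓝 x, ‖g y‖ < ‖g x‖ + 1 :=
      hg.self_of_nhds.norm.eventually_lt_const (by simp)
    refine ⟨?_, ‖B‖ * C * (‖g x‖ + 1) + ‖B‖ * (‖f x‖ + 1) * D, by positivity, ?_⟩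
    · filter_upwards [hf, hg] with y h1 h2
      exact (B.continuous.continuousAt.comp h1).clm_apply h2
    · have hbf' : ∀ᶠ p : E × E in 𝓝 (x, x), ‖f p.2‖ < ‖f x‖ + 1 :=
        (continuous_snd.continuousAt (x := (x, x))).eventually hbf
      have hbg' : ∀ᶠ p : E × E in 𝓝 (x, x), ‖g p.1‖ < ‖g x‖ + 1 :=
        (continuous_fst.continuousAt (x := (x, x))).eventually hbg
      filter_upwards [hC, hD, hbf', hbg'] with p h1 h2 h3 h4
      calc _ = ‖B (f p.1 - f p.2) (g p.1) + B (f p.2) (g p.1 - g p.2)‖ := by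
              congr 1; simp
        _ ≤ ‖B (f p.1 - f p.2) (g p.1)‖ + ‖B (f p.2) (g p.1 - g p.2)‖ := norm_add_le _ _
        _ ≤ ‖B‖ * ‖f p.1 - f p.2‖ * ‖g p.1‖ + ‖B‖ * ‖f p.2‖ * ‖g p.1 - g p.2‖ :=
            add_le_add (B.le_opNorm₂ _ _) (B.le_opNorm₂ _ _)
        _ ≤ ‖B‖ * (C * ‖p.1 - p.2‖ ^ α) * (‖g x‖ + 1)
              + ‖B‖ * (‖f x‖ + 1) * (D * ‖p.1 - p.2‖ ^ α) := by
            gcongr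
        _ = _ := by ring
  | succ m ih =>
    have hf' := hf.of_succ hα
    have hg' := hg.of_succ hα
    rw [ckAlphaNear_succ_iff] at *
    refine ⟨?_, ((ih (B.precompR E) hf' hg.2).add (ih (B.precompL E) hf.2 hg')).congr ?_⟩
    · filter_upwards [hf.1, hg.1] with y h1 h2
      exact (B.hasFDerivAt_of_bilinear h1.hasFDerivAt h2.hasFDerivAt).differentiableAt
    · filter_upwards [hf.1, hg.1] with y h1 h2
      exact (B.hasFDerivAt_of_bilinear h1.hasFDerivAt h2.hasFDerivAt).fderiv.symm

theorem ckAlphaNear_comp_step (hα : α ∈ Icc (0:ℝ) 1) {f : F → G} {g : E → F} {x : E}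
    (hf : ∀ᶠ y in 𝓝 (g x), DifferentiableAt ℝ f y)
    (hg : CkAlphaNear (m + 1) α g x)
    (hfg : CkAlphaNear m α (fun y => fderiv ℝ f (g y)) x) :
    CkAlphaNear (m + 1) α (fun y => f (g y)) x := by
  have hgc : ContinuousAt g x := hg.contDiffAt.continuousAt
  rw [ckAlphaNear_succ_iff] at *
  have hf' := hgc.eventually hf
  refine ⟨?_, (CkAlphaNear.bilin hα (ContinuousLinearMap.compL ℝ E F G) hfg hg.2).congr ?_⟩
  · filter_upwards [hf', hg.1] with y h1 h2
    exact h1.comp y h2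
  · filter_upwards [hf', hg.1] with y h1 h2
    exact (fderiv_comp y h1 h2).symm

theorem CkAlphaNear.comp (hα : α ∈ Icc (0:ℝ) 1) {f : F → G} {g : E → F} {x : E}
    (hf : CkAlphaNear m α f (g x)) (hg : CkAlphaNear m α g x) (hg1 : ContDiffAt ℝ 1 g x) :
    CkAlphaNear m α (fun y => f (g y)) x := by
  induction m generalizing G with
  | zero =>
    rw [ckAlphaNear_zero_iff] at *
    obtain ⟨hf, C, hC0, hC⟩ := hf
    obtain ⟨D, hD0, hD⟩ := ckAlphaNear_lip hg1
    have hgc := hg1.continuousAt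
    refine ⟨?_, C * D ^ α, by positivity, ?_⟩
    · filter_upwards [hgc.eventually hf, hg.1] with y h1 h2
      exact h1.comp h2
    · have h2 : Tendsto (fun p : E × E => (g p.1, g p.2)) (𝓝 (x, x)) (𝓝 (g x, g x)) :=
        (hgc.tendsto.comp (continuous_fst.tendsto (x, x))).prodMk_nhds
          (hgc.tendsto.comp (continuous_snd.tendsto (x, x)))
      filter_upwards [h2.eventually hC, hD] with p h3 h4
      refine h3.trans ?_
      rw [mul_assoc, ← Real.mul_rpow hD0 (norm_nonneg _)]
      have := hα.1
      gcongr
  | succ m ih =>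
    have hg' := hg.of_succ hα
    rw [ckAlphaNear_succ_iff] at hf
    exact ckAlphaNear_comp_step hα hf.1 hg (ih hf.2 hg')

theorem CkAlphaNear.comp_left (hα : α ∈ Icc (0:ℝ) 1) {f : F → G} {g : E → F} {x : E}
    (hf : ContDiffAt ℝ (m + 1) f (g x)) (hg : CkAlphaNear m α g x) :
    CkAlphaNear m α (fun y => f (g y)) x := by
  induction m generalizing G with
  | zero =>
    have hf1 : ContDiffAt ℝ 1 f (g x) := by simpa using hf
    rw [ckAlphaNear_zero_iff] at *
    obtain ⟨hg, C, hC0, hC⟩ := hg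
    obtain ⟨D, hD0, hD⟩ := ckAlphaNear_lip hf1
    have hgc := hg.self_of_nhds
    refine ⟨?_, D * C, by positivity, ?_⟩
    · filter_upwards [hgc.eventually (hf1.eventually (by simp)), hg] with y h1 h2
      exact ContinuousAt.comp h1.continuousAt h2
    · have h2 : Tendsto (fun p : E × E => (g p.1, g p.2)) (𝓝 (x, x)) (𝓝 (g x, g x)) :=
        (hgc.tendsto.comp (continuous_fst.tendsto (x, x))).prodMk_nhds
          (hgc.tendsto.comp (continuous_snd.tendsto (x, x)))
      filter_upwards [h2.eventually hD, hC] with p h3 h4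
      refine h3.trans ?_
      rw [mul_assoc]
      gcongr
  | succ m ih =>
    have hg' := hg.of_succ hα
    refine ckAlphaNear_comp_step hα ?_ hg (ih (hf.fderiv_right (by push_cast; rfl)) hg')
    have : ContDiffAt ℝ 1 f (g x) := hf.of_le (by push_cast; exact le_add_self)
    filter_upwards [this.eventually (by simp)] with y hy
    exact hy.differentiableAt (by simp)

theorem CkAlphaNear.inv [CompleteSpace E] (hα : α ∈ Icc (0:ℝ) 1) {X : E → F} {Z : F → E} {y₀ : F}
    (hX : CkAlphaNear m α X (Z y₀)) (hX1 : ContDiffAt ℝ 1 X (Z y₀)) (hZ1 : ContDiffAt ℝ 1 Z y₀)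
    (hXZ : ∀ᶠ y in 𝓝 y₀, X (Z y) = y) (hZX : ∀ᶠ x in 𝓝 (Z y₀), Z (X x) = x) :
    CkAlphaNear m α Z y₀ := by
  have hZc := hZ1.continuousAt
  have hZd : ∀ᶠ y in 𝓝 y₀, DifferentiableAt ℝ Z y := by
    filter_upwards [hZ1.eventually (by simp)] with y hy using hy.differentiableAt (by simp)
  have hXd : ∀ᶠ y in 𝓝 y₀, DifferentiableAt ℝ X (Z y) := by
    filter_upwards [hZc.eventually (hX1.eventually (by simp))] with y hy
      using hy.differentiableAt (by simp)
  have hinv : ∀ᶠ y in 𝓝 y₀,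
      (fderiv ℝ X (Z y)) ∘L (fderiv ℝ Z y) = ContinuousLinearMap.id ℝ F ∧
      (fderiv ℝ Z y) ∘L (fderiv ℝ X (Z y)) = ContinuousLinearMap.id ℝ E := by
    filter_upwards [hZd, hXd, hXZ.eventually_nhds, hZc.eventually hZX.eventually_nhds]
      with y h1 h2 h3 h4
    constructor
    · rw [← fderiv_comp y h2 h1]
      exact (Filter.EventuallyEq.fderiv_eq (f := id) h3).trans fderiv_id
    · have h5 : DifferentiableAt ℝ Z (X (Z y)) := by rw [h3.self_of_nhds]; exact h1
      have := fderiv_comp (Z y) h5 h2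
      rw [h3.self_of_nhds] at this
      rw [← this]
      exact (Filter.EventuallyEq.fderiv_eq (f := id) h4).trans fderiv_id
  have hsm : ∀ n : ℕ, ContDiffAt ℝ (n + 1)
      (ContinuousLinearMap.inverse : (E →L[ℝ] F) → (F →L[ℝ] E)) (fderiv ℝ X (Z y₀)) := by
    intro n
    obtain ⟨h1, h2⟩ := hinv.self_of_nhds
    exact contDiffAt_map_inverse (ContinuousLinearEquiv.equivOfInverse' _ _ h1 h2)
  induction m with
  | zero => exact ckAlphaNear_of_contDiffAt hα (by simpa using hZ1)
  | succ m ih =>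
    have hZm := ih (hX.of_succ hα)
    rw [ckAlphaNear_succ_iff] at hX ⊢
    refine ⟨hZd, (CkAlphaNear.comp_left (g := fun y => fderiv ℝ X (Z y)) hα (hsm m)
      (hX.2.comp hα hZm hZ1)).congr ?_⟩
    filter_upwards [hinv] with y hy
    exact ContinuousLinearMap.inverse_eq hy.1 hy.2

end HolderCalculus

section Core

variable {E : Type} [NormedAddCommGroup E] [NormedSpace ℝ E]

theorem convex_min_of_fderiv_zero {φ : E → ℝ} (hφ : ConvexOn ℝ Set.univ φ) {y : E}
    (hd : HasFDerivAt φ (0 : E →L[ℝ] ℝ) y) (w : E) : φ y ≤ φ w := by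
  have hc : ConvexOn ℝ Set.univ (φ ∘ AffineMap.lineMap (k := ℝ) y w) := by
    simpa using hφ.comp_affineMap (AffineMap.lineMap (k := ℝ) y w)
  have hl : HasDerivAt (AffineMap.lineMap (k := ℝ) y w) (w - y) 0 := AffineMap.hasDerivAt_lineMap
  have hd' : HasFDerivAt φ (0 : E →L[ℝ] ℝ) (AffineMap.lineMap (k := ℝ) y w (0:ℝ)) := by simpa using hd
  have h1 := hd'.comp_hasDerivAt (0:ℝ) hl
  have h2 : derivWithin (φ ∘ AffineMap.lineMap (k := ℝ) y w) (Set.Ioi 0) 0 = 0 := by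
    rw [h1.hasDerivWithinAt.derivWithin (uniqueDiffWithinAt_Ioi 0)]; simp
  have h3 := hc.isMinOn_of_rightDeriv_eq_zero (by simp) h2 (Set.mem_univ (1:ℝ))
  simpa using h3

/-- Facts on a nonnegative `C²` function vanishing at `0`. -/
theorem second_order_facts {f : E → ℝ} (hf : ContDiffAt ℝ 2 f 0) (hnn : ∀ x, 0 ≤ f x)
    (h0 : f 0 = 0) :
    fderiv ℝ f 0 = 0 ∧ (∀ v, 0 ≤ fderiv ℝ (fderiv ℝ f) 0 v v) ∧
    (∀ v w, fderiv ℝ (fderiv ℝ f) 0 v w = fderiv ℝ (fderiv ℝ f) 0 w v) := by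
  have hmin : IsLocalMin f 0 := Filter.Eventually.of_forall fun x => by rw [h0]; exact hnn x
  have hz : fderiv ℝ f 0 = 0 := hmin.fderiv_eq_zero
  refine ⟨hz, fun v => ?_, fun v w => ?_⟩
  · by_contra! hneg
    set u : ℝ → ℝ := fun t => f (t • v) with hu
    have hl : ∀ t : ℝ, HasDerivAt (fun t : ℝ => t • v) v t := fun t => by
      simpa using (hasDerivAt_id t).smul_const v
    have hlc : Tendsto (fun t : ℝ => t • v) (𝓝 0) (𝓝 0) := by
      have := (hl 0).continuousAt.tendsto
      simpa using this
    have hd1 : deriv u =ᶠ[𝓝 0] fun t => fderiv ℝ f (t • v) v := by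
      have hev : ∀ᶠ y in 𝓝 (0:E), DifferentiableAt ℝ f y := by
        filter_upwards [hf.eventually (by simp)] with y hy using hy.differentiableAt (by simp)
      filter_upwards [hlc.eventually hev] with t ht
      exact (ht.hasFDerivAt.comp_hasDerivAt t (hl t)).deriv
    have hd2 : deriv (deriv u) 0 = fderiv ℝ (fderiv ℝ f) 0 v v := by
      rw [hd1.deriv_eq]
      have h1 : HasFDerivAt (fderiv ℝ f) (fderiv ℝ (fderiv ℝ f) 0) 0 :=
        ((hf.fderiv_right (m := 1) (by norm_num)).differentiableAt (by simp)).hasFDerivAt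
      have h2 : HasFDerivAt (fun y => fderiv ℝ f y v)
          ((ContinuousLinearMap.apply ℝ ℝ v) ∘L (fderiv ℝ (fderiv ℝ f) 0)) ((0:ℝ) • v) := by
        rw [zero_smul]
        exact (ContinuousLinearMap.apply ℝ ℝ v).hasFDerivAt.comp (0:E) h1
      exact (h2.comp_hasDerivAt (0:ℝ) (hl 0)).deriv
    have hu0 : deriv u 0 = 0 := by
      rw [hd1.self_of_nhds]; simp [hz]
    have huc : ContinuousAt u 0 := by
      have : ContinuousAt f ((0:ℝ) • v) := by rw [zero_smul]; exact hf.continuousAt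
      exact ContinuousAt.comp this (hl 0).continuousAt
    have hmax := isLocalMax_of_deriv_deriv_neg (by rw [hd2]; exact hneg) hu0 huc
    have hconst : u =ᶠ[𝓝 0] fun _ => (0:ℝ) := by
      filter_upwards [hmax] with t ht
      have h1 : u 0 = 0 := by simp [hu, h0]
      rw [h1] at ht
      exact le_antisymm ht (hnn _)
    have : deriv (deriv u) 0 = 0 := by
      rw [hconst.deriv.deriv_eq]; simp
    rw [hd2] at this
    exact absurd this hneg.ne
  · exact (hf.isSymmSndFDerivAt (by simp)) v w

theorem posdef_iff_inj {B : E →L[ℝ] E →L[ℝ] ℝ} (hpsd : ∀ v, 0 ≤ B v v)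
    (hsymm : ∀ v w, B v w = B w v) :
    (∀ v, v ≠ 0 → 0 < B v v) ↔ Function.Injective B := by
  rw [injective_iff_map_eq_zero]
  constructor
  · intro h v hv
    by_contra hne
    have := h v hne
    simp [hv] at this
  · intro h v hv
    refine lt_of_le_of_ne (hpsd v) fun hvv => hv (h v ?_)
    ext w
    have hq : ∀ t : ℝ, 0 ≤ B w w * (t * t) + (2 * B v w) * t + 0 := by
      intro t
      have h1 := hpsd (v + t • w)
      simp only [map_add, map_smul, add_apply, smul_apply,
        smul_eq_mul] at h1
      rw [← hvv, hsymm w v] at h1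
      linarith
    have h2 := discrim_le_zero hq
    simp only [discrim] at h2
    have h3 : B v w ^ 2 ≤ 0 := by nlinarith
    simpa using h3

theorem exists_local_inverse [CompleteSpace E] {F : Type} [NormedAddCommGroup F] [NormedSpace ℝ F]
    {X : E → F} (e : E ≃L[ℝ] F) (hX0 : X 0 = 0) (hX : ContDiffAt ℝ 1 X 0)
    (hd : HasFDerivAt X (e : E →L[ℝ] F) 0) :
    ∃ Z : F → E, Z 0 = 0 ∧ ContDiffAt ℝ 1 Z 0 ∧ (∀ᶠ y in 𝓝 0, X (Z y) = y) ∧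
      (∀ᶠ x in 𝓝 0, Z (X x) = x) ∧ fderiv ℝ Z 0 = (e.symm : F →L[ℝ] E) := by
  have hs : HasStrictFDerivAt X (e : E →L[ℝ] F) 0 := hX.hasStrictFDerivAt' hd (by simp)
  refine ⟨hs.localInverse, ?_, ?_, ?_, hs.eventually_left_inverse, ?_⟩
  · have := hs.localInverse_apply_image
    rwa [hX0] at this
  · have := hX.to_localInverse hd (by simp)
    rwa [hX0] at this
  · have := hs.eventually_right_inverse
    rwa [hX0] at this
  · have := hs.to_localInverse.hasFDerivAt.fderiv
    rwa [hX0] at this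

theorem core [FiniteDimensional ℝ E] (f g : E → ℝ)
    (hfnn : ∀ x, 0 ≤ f x) (hgnn : ∀ x, 0 ≤ g x)
    (hfconv : ConvexOn ℝ Set.univ f) (hgconv : ConvexOn ℝ Set.univ g)
    (hf : ContDiffAt ℝ 2 f 0) (hg : ContDiffAt ℝ 2 g 0)
    (hf0 : f 0 = 0) (hg0 : g 0 = 0)
    (hfpos : ∀ v, v ≠ 0 → 0 < fderiv ℝ (fderiv ℝ f) 0 v v) :
    ContDiffAt ℝ 2 (infConv f g) 0 ∧
    ((∀ v, v ≠ 0 → 0 < fderiv ℝ (fderiv ℝ g) 0 v v) ↔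
      (∀ v, v ≠ 0 → 0 < fderiv ℝ (fderiv ℝ (infConv f g)) 0 v v)) ∧
    ∀ α ∈ Icc (0:ℝ) 1, ∀ m : ℕ, CkAlphaNear (m + 2) α f 0 →
      (CkAlphaNear (m + 2) α g 0 ↔ CkAlphaNear (m + 2) α (infConv f g) 0) := by
  have : CompleteSpace E := FiniteDimensional.complete ℝ E
  obtain ⟨hdf, hApsd, hAsymm⟩ := second_order_facts hf hfnn hf0
  obtain ⟨hdg, hBpsd, hBsymm⟩ := second_order_facts hg hgnn hg0
  set A := fderiv ℝ (fderiv ℝ f) 0 with hA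
  set B := fderiv ℝ (fderiv ℝ g) 0 with hB
  have hAinj : Function.Injective A := (posdef_iff_inj hApsd hAsymm).1 hfpos
  have hDf : ContDiffAt ℝ 1 (fderiv ℝ f) 0 := hf.fderiv_right (by norm_num)
  have hDg : ContDiffAt ℝ 1 (fderiv ℝ g) 0 := hg.fderiv_right (by norm_num)
  have hDfd : HasFDerivAt (fderiv ℝ f) A 0 := (hDf.differentiableAt (by simp)).hasFDerivAt
  have hDgd : HasFDerivAt (fderiv ℝ g) B 0 := (hDg.differentiableAt (by simp)).hasFDerivAt
  have hfd : ∀ᶠ y in 𝓝 (0:E), DifferentiableAt ℝ f y := by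
    filter_upwards [hf.eventually (by simp)] with y hy using hy.differentiableAt (by simp)
  have hgd : ∀ᶠ y in 𝓝 (0:E), DifferentiableAt ℝ g y := by
    filter_upwards [hg.eventually (by simp)] with y hy using hy.differentiableAt (by simp)
  -- the inverse of the gradient map of `f`
  have hrank : Module.finrank ℝ E = Module.finrank ℝ (E →L[ℝ] ℝ) := by
    rw [← (LinearMap.toContinuousLinearMap (𝕜 := ℝ) (E := E) (F' := ℝ)).finrank_eq]
    exact (Subspace.dual_finrank_eq (K := ℝ) (V := E)).symm
  let eA : E ≃L[ℝ] (E →L[ℝ] ℝ) :=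
    (LinearMap.linearEquivOfInjective (A : E →ₗ[ℝ] (E →L[ℝ] ℝ)) hAinj hrank).toContinuousLinearEquiv
  have heA : ∀ v, eA v = A v := fun v => rfl
  have heA' : (eA : E →L[ℝ] (E →L[ℝ] ℝ)) = A := by ext v; rfl
  obtain ⟨ψ, hψ0, hψ1, hfψ, hψf, hψd⟩ :=
    exists_local_inverse eA hdf hDf (by rw [heA']; exact hDfd)
  -- the map `X = id + ψ ∘ Dg`
  let X : E → E := fun z => z + ψ (fderiv ℝ g z)
  have hX0 : X 0 = 0 := by simp [X, hdg, hψ0]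
  have hψ1' : ContDiffAt ℝ 1 ψ (fderiv ℝ g 0) := by rw [hdg]; exact hψ1
  have hX1 : ContDiffAt ℝ 1 X 0 := contDiffAt_id.add (hψ1'.comp 0 hDg)
  have hXd : HasFDerivAt X (ContinuousLinearMap.id ℝ E + (eA.symm : (E →L[ℝ] ℝ) →L[ℝ] E) ∘L B) 0 := by
    have h1 : HasFDerivAt ψ (eA.symm : (E →L[ℝ] ℝ) →L[ℝ] E) (fderiv ℝ g 0) := by
      rw [hdg, ← hψd]; exact (hψ1.differentiableAt (by simp)).hasFDerivAt
    exact (hasFDerivAt_id 0).add (h1.comp 0 hDgd)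
  have hTinj : Function.Injective
      (ContinuousLinearMap.id ℝ E + (eA.symm : (E →L[ℝ] ℝ) →L[ℝ] E) ∘L B) := by
    rw [injective_iff_map_eq_zero]
    intro v hv
    have h1 : A v + B v = 0 := by
      have := congrArg eA hv
      rw [map_zero] at this
      rw [← this]
      change A v + B v = eA (v + eA.symm (B v))
      rw [map_add, eA.apply_symm_apply, heA]
    by_contra hne
    have h2 := congrArg (fun l : E →L[ℝ] ℝ => l v) h1
    simp only [add_apply, zero_apply] at h2
    have := hfpos v hne
    have := hBpsd v
    linarith
  let eT : E ≃L[ℝ] E := (LinearMap.linearEquivOfInjective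
    ((ContinuousLinearMap.id ℝ E + (eA.symm : (E →L[ℝ] ℝ) →L[ℝ] E) ∘L B : E →L[ℝ] E) : E →ₗ[ℝ] E)
    hTinj rfl).toContinuousLinearEquiv
  have heT : (eT : E →L[ℝ] E) =
    ContinuousLinearMap.id ℝ E + (eA.symm : (E →L[ℝ] ℝ) →L[ℝ] E) ∘L B := by ext v; rfl
  obtain ⟨Z, hZ0, hZ1, hXZ, hZX, hZd⟩ :=
    exists_local_inverse eT hX0 hX1 (by rw [heT]; exact hXd)
  have hZc : Tendsto Z (𝓝 0) (𝓝 0) := by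
    have := hZ1.continuousAt.tendsto
    rwa [hZ0] at this
  have hXc : Tendsto X (𝓝 0) (𝓝 0) := by
    have := hX1.continuousAt.tendsto
    rwa [hX0] at this
  have hDgc : Tendsto (fderiv ℝ g) (𝓝 0) (𝓝 0) := by
    have := hDg.continuousAt.tendsto
    rwa [hdg] at this
  have hYc : Tendsto (fun x => x - Z x) (𝓝 0) (𝓝 0) := by
    simpa using tendsto_id.sub hZc
  -- optimality
  have hY : ∀ᶠ x in 𝓝 (0:E), x - Z x = ψ (fderiv ℝ g (Z x)) := by
    filter_upwards [hXZ] with x hx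
    rw [sub_eq_iff_eq_add, add_comm]
    exact hx.symm
  have hopt : ∀ᶠ x in 𝓝 (0:E), fderiv ℝ f (x - Z x) = fderiv ℝ g (Z x) := by
    filter_upwards [hY, (hDgc.comp hZc).eventually hfψ] with x h1 h2
    rw [h1]; exact h2
  have hval : ∀ᶠ x in 𝓝 (0:E), infConv f g x = f (x - Z x) + g (Z x) := by
    filter_upwards [hopt, hYc.eventually hfd, hZc.eventually hgd] with x h1 h2 h3
    have hc : ConvexOn ℝ Set.univ (fun y => f y + g (x - y)) := by
      refine hfconv.add ?_
      have := hgconv.comp_affineMap (AffineMap.const ℝ E x - AffineMap.id ℝ E)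
      simpa [Function.comp_def] using this
    have hd : HasFDerivAt (fun y => f y + g (x - y)) (0 : E →L[ℝ] ℝ) (x - Z x) := by
      have h4 : HasFDerivAt g (fderiv ℝ g (Z x)) (x - (x - Z x)) := by
        rw [sub_sub_cancel]; exact h3.hasFDerivAt
      have h5 := h2.hasFDerivAt.add
        (h4.comp (x - Z x) ((hasFDerivAt_id (𝕜 := ℝ) (x - Z x)).const_sub x))
      refine h5.congr_fderiv ?_
      rw [h1]; ext v; simp
    have hmin := convex_min_of_fderiv_zero hc hd
    refine le_antisymm ?_ ?_
    · have := ciInf_le (f := fun y => f y + g (x - y))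
        ⟨0, by rintro _ ⟨y, rfl⟩; exact add_nonneg (hfnn _) (hgnn _)⟩ (x - Z x)
      simpa [infConv] using this
    · refine le_ciInf fun y => ?_
      simpa using hmin y
  have hDh' : ∀ᶠ x in 𝓝 (0:E), HasFDerivAt (infConv f g) (fderiv ℝ g (Z x)) x := by
    have hZd : ∀ᶠ y in 𝓝 (0:E), DifferentiableAt ℝ Z y := by
      filter_upwards [hZ1.eventually (by simp)] with y hy using hy.differentiableAt (by simp)
    filter_upwards [hopt, hYc.eventually hfd, hZc.eventually hgd, hval.eventually_nhds, hZd]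
      with x h1 h2 h3 h4 h5
    have h6 := (h2.hasFDerivAt.comp x ((hasFDerivAt_id (𝕜 := ℝ) x).sub h5.hasFDerivAt)).add
      (h3.hasFDerivAt.comp x h5.hasFDerivAt)
    refine (h6.congr_of_eventuallyEq h4).congr_fderiv ?_
    rw [h1]; ext v; simp
  have hDh : fderiv ℝ (infConv f g) =ᶠ[𝓝 0] fun x => fderiv ℝ g (Z x) := by
    filter_upwards [hDh'] with x hx using hx.fderiv
  have hDgZ : ContDiffAt ℝ 1 (fderiv ℝ g) (Z 0) := by rw [hZ0]; exact hDg
  have hhC2 : ContDiffAt ℝ 2 (infConv f g) 0 := by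
    have := (contDiffAt_succ_iff_hasFDerivAt (𝕜 := ℝ) (f := infConv f g) (x := 0) (n := 1)).2
      ⟨fun x => fderiv ℝ g (Z x), ⟨_, hDh', fun x hx => hx⟩, by
        rw [Nat.cast_one]; exact hDgZ.comp 0 hZ1⟩
    norm_num at this
    exact this
  have hhnn : ∀ x, 0 ≤ infConv f g x := fun x =>
    le_ciInf fun y => add_nonneg (hfnn _) (hgnn _)
  have hh0 : infConv f g 0 = 0 := by
    rw [hval.self_of_nhds]; simp [hZ0, hf0, hg0]
  obtain ⟨hdh, hHpsd, hHsymm⟩ := second_order_facts hhC2 hhnn hh0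
  refine ⟨hhC2, ?_, ?_⟩
  · rw [posdef_iff_inj hBpsd hBsymm, posdef_iff_inj hHpsd hHsymm]
    have hH : fderiv ℝ (fderiv ℝ (infConv f g)) 0 = B ∘L (eT.symm : E →L[ℝ] E) := by
      rw [hDh.fderiv_eq, ← hZd]
      have h1 : HasFDerivAt (fderiv ℝ g) B (Z 0) := by rw [hZ0]; exact hDgd
      exact (h1.comp 0 (hZ1.differentiableAt (by simp)).hasFDerivAt).fderiv
    rw [hH, ContinuousLinearMap.coe_comp]
    exact (Function.Injective.of_comp_iff' (f := B) eT.symm.bijective).symm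
  · intro α hα m hfk
    have hDfk : CkAlphaNear (m + 1) α (fderiv ℝ f) 0 := (ckAlphaNear_succ_iff.1 hfk).2
    have hψk : CkAlphaNear (m + 1) α ψ 0 := by
      refine CkAlphaNear.inv hα (X := fderiv ℝ f) ?_ ?_ hψ1 hfψ ?_ <;> rw [hψ0] <;> assumption
    rw [ckAlphaNear_succ_iff, ckAlphaNear_succ_iff (f := infConv f g)]
    have hhd : ∀ᶠ y in 𝓝 (0:E), DifferentiableAt ℝ (infConv f g) y := by
      filter_upwards [hDh'] with x hx using hx.differentiableAt
    constructor
    · rintro ⟨-, hgk⟩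
      refine ⟨hhd, ?_⟩
      have h1 : CkAlphaNear (m + 1) α X 0 := by
        refine (ckAlphaNear_of_contDiffAt hα contDiffAt_id).add
          (CkAlphaNear.comp (f := ψ) hα ?_ hgk hDg)
        rw [hdg]; exact hψk
      have h2 : CkAlphaNear (m + 1) α Z 0 := by
        refine CkAlphaNear.inv hα (X := X) ?_ ?_ hZ1 hXZ ?_ <;> rw [hZ0] <;> assumption
      refine CkAlphaNear.congr (CkAlphaNear.comp (f := fderiv ℝ g) hα ?_ h2 hZ1) hDh.symm
      rw [hZ0]; exact hgk
    · rintro ⟨-, hhk⟩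
      refine ⟨hgd, ?_⟩
      have hhk1 : ContDiffAt ℝ 1 (fderiv ℝ (infConv f g)) 0 := hhC2.fderiv_right (by norm_num)
      have h1 : CkAlphaNear (m + 1) α (fun x => ψ (fderiv ℝ (infConv f g) x)) 0 := by
        refine CkAlphaNear.comp (f := ψ) hα ?_ hhk hhk1
        rw [hdh]; exact hψk
      have h2 : CkAlphaNear (m + 1) α (fun x => x + -ψ (fderiv ℝ (infConv f g) x)) 0 :=
        (ckAlphaNear_of_contDiffAt hα contDiffAt_id).add
          (CkAlphaNear.comp_left (f := fun v : E => -v) hα contDiff_neg.contDiffAt h1)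
      have h3 : CkAlphaNear (m + 1) α Z 0 := by
        refine h2.congr ?_
        filter_upwards [hDh, hY] with x h4 h5
        rw [h4, ← h5]; abel
      have h4 : CkAlphaNear (m + 1) α X 0 := by
        refine CkAlphaNear.inv hα (X := Z) ?_ ?_ hX1 hZX ?_ <;> rw [hX0] <;> assumption
      have h5 : CkAlphaNear (m + 1) α (fun z => fderiv ℝ (infConv f g) (X z)) 0 := by
        refine CkAlphaNear.comp hα ?_ h4 hX1
        rw [hX0]; exact hhk
      refine h5.congr ?_
      filter_upwards [hXc.eventually hDh, hZX] with z h6 h7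
      rw [h6, h7]

end Core

/-- local-graph form of Theorem 1.1 of the paper. Suppose `f` is `C^{k,α}`
near `0` and `Hess f|₀ > 0`. Then (i) `h = f □ g` is `C²` near `0`;
(ii) `Hess g|₀ > 0 ↔ Hess h|₀ > 0`; (iii) `g` is `C^{k,α}` near `0` iff `h` is. -/
theorem stmt6 (n : ℕ) (hn : 1 ≤ n) (k : ℕ) (hk : 2 ≤ k) (α : ℝ) (hα : α ∈ Icc (0:ℝ) 1)
    (f g : EuclideanSpace ℝ (Fin n) → ℝ)
    (hfnn : ∀ x, 0 ≤ f x) (hgnn : ∀ x, 0 ≤ g x)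
    (hfconv : ConvexOn ℝ Set.univ f) (hgconv : ConvexOn ℝ Set.univ g)
    (hfC2 : ∃ V ∈ 𝓝 (0 : EuclideanSpace ℝ (Fin n)), ContDiffOn ℝ 2 f V)
    (hgC2 : ∃ V ∈ 𝓝 (0 : EuclideanSpace ℝ (Fin n)), ContDiffOn ℝ 2 g V)
    (hf0 : f 0 = 0) (hg0 : g 0 = 0)
    (hfkα : CkAlphaNear k α f 0)
    (hfpos : ∀ v : EuclideanSpace ℝ (Fin n), v ≠ 0 →
      0 < iteratedFDeriv ℝ 2 f 0 ![v, v]) :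
    (∃ V ∈ 𝓝 (0 : EuclideanSpace ℝ (Fin n)), ContDiffOn ℝ 2 (infConv f g) V) ∧
    ((∀ v : EuclideanSpace ℝ (Fin n), v ≠ 0 → 0 < iteratedFDeriv ℝ 2 g 0 ![v, v]) ↔
      (∀ v : EuclideanSpace ℝ (Fin n), v ≠ 0 →
        0 < iteratedFDeriv ℝ 2 (infConv f g) 0 ![v, v])) ∧
    (CkAlphaNear k α g 0 ↔ CkAlphaNear k α (infConv f g) 0) := by
  have hf2 : ContDiffAt ℝ 2 f 0 := by
    obtain ⟨V, hV, h⟩ := hfC2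
    exact h.contDiffAt hV
  have hg2 : ContDiffAt ℝ 2 g 0 := by
    obtain ⟨V, hV, h⟩ := hgC2
    exact h.contDiffAt hV
  simp only [iteratedFDeriv_two_apply, Matrix.cons_val_zero, Matrix.cons_val_one] at hfpos ⊢
  obtain ⟨h1, h2, h3⟩ := core f g hfnn hgnn hfconv hgconv hf2 hg2 hf0 hg0 hfpos
  obtain ⟨m, rfl⟩ := Nat.exists_eq_add_of_le' hk
  refine ⟨?_, h2, h3 α hα m hfkα⟩
  obtain ⟨V, hV, h⟩ := h1.contDiffOn (m := 2) le_rfl (by simp)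
  exact ⟨V, by simpa using hV, h⟩
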